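/- (Bayes optimality of a neighborhood of g_λ.) Suppose assumptions (A2)–(A5) hold and that the expected risk L is convex and continuous on H. Then there exists λ > 0 such that every g ∈ H with ‖g − g_λ‖ ≤ m(δ)/(2R) is a Bayes classifier for the classification error, i.e. R(x ↦ ⟨g,Φ(x)⟩) = R*. -/

import Mathlib

open MeasureTheory Filter Set
open scoped RealInnerProductSpace ENNReal

/-!
Since `h_* (η x)` is the unique minimizer of the conditional risk at `x`, every risk minimizer
`g₀ ∈ H` satisfies `⟪g₀, Φ x⟫ = h_* (η x)` almost everywhere. Exchanging the two labels gives
`h_* (1 - p) = -h_* p`, so the low-noise condition and the monotonicity of `h_*` force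
`|⟪g₀, Φ x⟫| > m(δ)` almost everywhere, with the sign of the Bayes classifier, and a perturbation
of `g₀` of norm at most `m(δ) / R` cannot change that sign. Strong convexity makes the regularized
minimizers `g_λ` converge to such a `g₀` as `λ → 0⁺`; once `‖g_λ - g₀‖ ≤ m(δ) / (2 * R)`, half of
the margin is left for `g - g_λ`.
-/

open scoped Topology

section Tikhonov

theorem add_modulus_le_of_isMinOn {E : Type*} [NormedAddCommGroup E] [NormedSpace ℝ E]
    {s : Set E} {ψ : ℝ → ℝ} {f : E → ℝ} (hf : UniformConvexOn s ψ f) {a x : E}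
    (hmin : IsMinOn f s a) (ha : a ∈ s) (hx : x ∈ s) : f a + ψ ‖a - x‖ ≤ f x := by
  have segment_bound : ∀ t ∈ Ioo (0 : ℝ) 1, f a + (1 - t) * ψ ‖a - x‖ ≤ f x := by
    rintro t ⟨ht0, ht1⟩
    have hmem : (1 - t) • a + t • x ∈ s := hf.1 ha hx (by linarith) ht0.le (by ring)
    have hconv := hf.2 ha hx (by linarith : 0 ≤ 1 - t) ht0.le (by ring)
    have hle := isMinOn_iff.1 hmin _ hmem
    simp only [smul_eq_mul] at hconv
    refine le_of_mul_le_mul_left ?_ ht0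
    linarith
  have hlim : Tendsto (fun t : ℝ => f a + (1 - t) * ψ ‖a - x‖) (𝓝[>] 0)
      (𝓝 (f a + ψ ‖a - x‖)) := by
    refine tendsto_nhdsWithin_of_tendsto_nhds (Continuous.tendsto' (by fun_prop) _ _ ?_)
    ring
  exact le_of_tendsto hlim
    (mem_of_superset (Ioo_mem_nhdsGT one_pos) segment_bound)

variable {H : Type*} [NormedAddCommGroup H] {L : H → ℝ}

/-- `a` minimizes the Tikhonov-regularized functional `L_λ = L + (λ / 2) ‖·‖²`; this is the `g_λ`
of the paper, as a predicate because a minimizer need not exist for a general `L`. -/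
def IsTikhonovMin (L : H → ℝ) (lam : ℝ) (a : H) : Prop :=
  ∀ g : H, L a + lam / 2 * ‖a‖ ^ 2 ≤ L g + lam / 2 * ‖g‖ ^ 2

namespace IsTikhonovMin

variable {lam mu : ℝ} {a b x : H}

theorem norm_sq_le (ha : IsTikhonovMin L lam a) (hlam : 0 < lam) (hx : L x ≤ L a) :
    ‖a‖ ^ 2 ≤ ‖x‖ ^ 2 := by
  refine le_of_mul_le_mul_left ?_ (half_pos hlam)
  linarith [ha x]

theorem apply_le_of_lt (ha : IsTikhonovMin L lam a) (hb : IsTikhonovMin L mu b)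
    (hmu : 0 ≤ mu) (hlt : mu < lam) : L b ≤ L a := by
  have ha' := mul_le_mul_of_nonneg_left (ha b) hmu
  have hb' := mul_le_mul_of_nonneg_left (hb a) (hmu.trans hlt.le)
  refine le_of_mul_le_mul_left ?_ (sub_pos.2 hlt)
  linarith

variable [InnerProductSpace ℝ H]

theorem add_norm_sub_sq_le (ha : IsTikhonovMin L lam a) (hL : ConvexOn ℝ univ L) (x : H) :
    L a + lam / 2 * ‖a‖ ^ 2 + lam / 2 * ‖a - x‖ ^ 2 ≤ L x + lam / 2 * ‖x‖ ^ 2 := by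
  have hstrong : StrongConvexOn univ lam fun g => L g + lam / 2 * ‖g‖ ^ 2 := by
    simpa only [strongConvexOn_iff_convex, add_sub_cancel_right] using hL
  exact add_modulus_le_of_isMinOn hstrong (fun g _ => ha g) (mem_univ a) (mem_univ x)

theorem norm_sub_sq_le (ha : IsTikhonovMin L lam a) (hL : ConvexOn ℝ univ L) (hlam : 0 < lam)
    (hx : L x ≤ L a) : ‖a - x‖ ^ 2 ≤ ‖x‖ ^ 2 - ‖a‖ ^ 2 := by
  have hgrowth := ha.add_norm_sub_sq_le hL x
  refine le_of_mul_le_mul_left ?_ (half_pos hlam)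
  linarith

end IsTikhonovMin

variable {ι : Type*} {l : Filter ι} [l.NeBot] {lam : ι → ℝ} {a : ι → H} {gstar : H}

theorem apply_le_of_tendsto_isTikhonovMin (hL : LowerSemicontinuous L)
    (hlam : Tendsto lam l (𝓝 0)) (ha : ∀ᶠ i in l, IsTikhonovMin L (lam i) (a i)) {g : H}
    (hag : Tendsto a l (𝓝 g)) (x : H) : L g ≤ L x := by
  have hbound : Tendsto (fun i => L x + lam i / 2 * (‖x‖ ^ 2 - ‖a i‖ ^ 2)) l (𝓝 (L x)) := by
    simpa using ((hlam.div_const 2).mul ((hag.norm.pow 2).const_sub (‖x‖ ^ 2))).const_add (L x)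
  refine le_of_forall_lt_imp_le_of_dense fun y hy => ge_of_tendsto hbound ?_
  filter_upwards [hag.eventually (hL g y hy), ha] with i hyi hai
  linarith [hai x]

variable [InnerProductSpace ℝ H]

/- The squared norms of all minimizers with `λ > 0` are bounded by `‖gstar‖²`. Once one of them
is within `(ε / 2)²` of their supremum, every minimizer with a smaller `λ` is `ε / 2`-close to the
corresponding minimizer. -/
theorem cauchy_map_of_isTikhonovMin (hL : ConvexOn ℝ univ L) (hgstar : ∀ g, L gstar ≤ L g)
    (hlam : Tendsto lam l (𝓝[>] 0)) (ha : ∀ᶠ i in l, IsTikhonovMin L (lam i) (a i)) :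
    Cauchy (map a l) := by
  have hpos : ∀ᶠ i in l, 0 < lam i := hlam.eventually self_mem_nhdsWithin
  let S : Set ℝ := {r | ∃ mu > 0, ∃ b, IsTikhonovMin L mu b ∧ ‖b‖ ^ 2 = r}
  have hSne : S.Nonempty := by
    obtain ⟨i, hi, hai⟩ := (hpos.and ha).exists
    exact ⟨_, lam i, hi, a i, hai, rfl⟩
  have hSbdd : BddAbove S := by
    refine ⟨‖gstar‖ ^ 2, ?_⟩
    rintro _ ⟨mu, hmu, b, hb, rfl⟩
    exact hb.norm_sq_le hmu (hgstar b)
  refine Metric.cauchy_iff.2 ⟨inferInstance, fun ε hε => ?_⟩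
  obtain ⟨_, ⟨mu, hmu, b, hb, rfl⟩, hbsup⟩ :=
    exists_lt_of_lt_csSup hSne (sub_lt_self (sSup S) (by positivity : 0 < (ε / 2) ^ 2))
  have hclose : ∀ᶠ i in l, a i ∈ Metric.ball b (ε / 2) := by
    filter_upwards [ha, hpos, hlam.eventually (Ioo_mem_nhdsGT hmu)] with i hai hi hlt
    have hsub := hb.norm_sub_sq_le hL hmu (hb.apply_le_of_lt hai hi.le hlt.2)
    have hsup : ‖a i‖ ^ 2 ≤ sSup S := le_csSup hSbdd ⟨lam i, hi, a i, hai, rfl⟩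
    rw [mem_ball_iff_norm']
    refine lt_of_pow_lt_pow_left₀ 2 (by positivity) ?_
    linarith
  refine ⟨_, hclose, fun x hx y hy => ?_⟩
  linarith [dist_triangle_right x y b, Metric.mem_ball.1 hx, Metric.mem_ball.1 hy]

theorem exists_tendsto_isTikhonovMin [CompleteSpace H] (hL : ConvexOn ℝ univ L)
    (hLlsc : LowerSemicontinuous L) (hgstar : ∀ g, L gstar ≤ L g)
    (hlam : Tendsto lam l (𝓝[>] 0)) (ha : ∀ᶠ i in l, IsTikhonovMin L (lam i) (a i)) :
    ∃ g₀, (∀ g, L g₀ ≤ L g) ∧ Tendsto a l (𝓝 g₀) := by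
  obtain ⟨g₀, hg₀⟩ := CompleteSpace.complete (cauchy_map_of_isTikhonovMin hL hgstar hlam ha)
  exact ⟨g₀, apply_le_of_tendsto_isTikhonovMin hLlsc (hlam.mono_right nhdsWithin_le_nhds) ha hg₀,
    hg₀⟩

theorem exists_eventually_isTikhonovMin_mem [CompleteSpace H] (hL : ConvexOn ℝ univ L)
    (hLlsc : LowerSemicontinuous L) (hgstar : ∀ g, L gstar ≤ L g) :
    ∃ g₀, (∀ g, L g₀ ≤ L g) ∧
      ∀ U ∈ 𝓝 g₀, ∀ᶠ lam in 𝓝[>] 0, ∀ a, IsTikhonovMin L lam a → a ∈ U := by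
  -- All minimizers converge simultaneously along the graph of `λ ↦ {minimizers of L_λ}`.
  set graph : Filter (ℝ × H) := comap Prod.fst (𝓝[>] 0) ⊓ 𝓟 {p | IsTikhonovMin L p.1 p.2}
    with hgraph
  have hfst : Tendsto Prod.fst graph (𝓝[>] 0) := tendsto_comap.mono_left inf_le_left
  have hmin : ∀ᶠ p in graph, IsTikhonovMin L p.1 p.2 := mem_inf_of_right (mem_principal_self _)
  obtain ⟨g₀, hg₀, hlim⟩ : ∃ g₀, (∀ g, L g₀ ≤ L g) ∧ Tendsto Prod.snd graph (𝓝 g₀) := by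
    rcases graph.eq_or_neBot with hbot | _
    · exact ⟨gstar, hgstar, hbot ▸ tendsto_bot⟩
    · exact exists_tendsto_isTikhonovMin hL hLlsc hgstar hfst hmin
  refine ⟨g₀, hg₀, fun U hU => ?_⟩
  have hev := hlim.eventually_mem hU
  rw [hgraph, eventually_inf_principal, eventually_comap] at hev
  exact hev.mono fun lam hlam a ha => hlam (lam, a) rfl ha

end Tikhonov

section LinkFunction

/-- The conditional `φ`-risk of predicting `t` at a point where the label is `1` with probability
`p` and `-1` with probability `1 - p`. -/
def conditionalRisk (φ : ℝ → ℝ) (p t : ℝ) : ℝ :=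
  p * φ t + (1 - p) * φ (-t)

/-- `h` is the link function `h_*` of the loss `φ` (A4): on `(0, 1)` it is strictly increasing and
`h p` is the unique minimizer of the conditional risk. Values outside `(0, 1)` are unconstrained. -/
structure IsLinkFunction (φ h : ℝ → ℝ) : Prop where
  strictMonoOn : StrictMonoOn h (Ioo 0 1)
  conditionalRisk_lt : ∀ p ∈ Ioo (0 : ℝ) 1, ∀ t, t ≠ h p →
    conditionalRisk φ p (h p) < conditionalRisk φ p t

/-- The margin `m(δ)` of the link function `h` at noise level `δ`. -/
noncomputable def linkMargin (h : ℝ → ℝ) (δ : ℝ) : ℝ :=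
  max (h (1 / 2 + δ)) |h (1 / 2 - δ)|

theorem conditionalRisk_one_sub_neg (φ : ℝ → ℝ) (p t : ℝ) :
    conditionalRisk φ (1 - p) (-t) = conditionalRisk φ p t := by
  simp only [conditionalRisk, neg_neg, sub_sub_cancel]
  ring

namespace IsLinkFunction

variable {φ h : ℝ → ℝ} {p t δ : ℝ}

theorem conditionalRisk_le (hh : IsLinkFunction φ h) (hp : p ∈ Ioo (0 : ℝ) 1) (t : ℝ) :
    conditionalRisk φ p (h p) ≤ conditionalRisk φ p t := by
  rcases eq_or_ne t (h p) with rfl | ht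
  · exact le_rfl
  · exact (hh.conditionalRisk_lt p hp t ht).le

theorem map_one_sub (hh : IsLinkFunction φ h) (hp : p ∈ Ioo (0 : ℝ) 1) :
    h (1 - p) = -h p := by
  have hq : 1 - p ∈ Ioo (0 : ℝ) 1 := Ioo.one_sub_mem hp
  by_contra hne
  have hlt := hh.conditionalRisk_lt (1 - p) hq (-h p) (Ne.symm hne)
  have hle := hh.conditionalRisk_le hp (-h (1 - p))
  rw [conditionalRisk_one_sub_neg] at hlt
  rw [← conditionalRisk_one_sub_neg φ p (-h (1 - p)), neg_neg] at hle
  exact hle.not_gt hlt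

theorem map_half_sub (hh : IsLinkFunction φ h) (hδ : δ ∈ Ioo (0 : ℝ) (1 / 2)) :
    h (1 / 2 - δ) = -h (1 / 2 + δ) := by
  rw [← hh.map_one_sub ⟨by linarith [hδ.1], by linarith [hδ.2]⟩]
  congr 1
  ring

theorem map_half_add_pos (hh : IsLinkFunction φ h) (hδ : δ ∈ Ioo (0 : ℝ) (1 / 2)) :
    0 < h (1 / 2 + δ) := by
  have hlt : h (1 / 2 - δ) < h (1 / 2 + δ) :=
    hh.strictMonoOn ⟨by linarith [hδ.2], by linarith [hδ.1]⟩
      ⟨by linarith [hδ.1], by linarith [hδ.2]⟩ (by linarith [hδ.1])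
  rw [hh.map_half_sub hδ] at hlt
  linarith

theorem linkMargin_eq (hh : IsLinkFunction φ h) (hδ : δ ∈ Ioo (0 : ℝ) (1 / 2)) :
    linkMargin h δ = h (1 / 2 + δ) := by
  rw [linkMargin, hh.map_half_sub hδ, abs_neg, abs_of_pos (hh.map_half_add_pos hδ), max_self]

theorem linkMargin_pos (hh : IsLinkFunction φ h) (hδ : δ ∈ Ioo (0 : ℝ) (1 / 2)) :
    0 < linkMargin h δ :=
  (hh.map_half_add_pos hδ).trans_eq (hh.linkMargin_eq hδ).symm

theorem sign_eq_of_abs_sub_le (hh : IsLinkFunction φ h) (hδ : δ ∈ Ioo (0 : ℝ) (1 / 2))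
    (hp : p ∈ Ioo (0 : ℝ) 1) (hpδ : δ < |p - 1 / 2|) (ht : |t - h p| ≤ linkMargin h δ) :
    Real.sign t = Real.sign (2 * p - 1) := by
  rw [hh.linkMargin_eq hδ, abs_le] at ht
  obtain ⟨hδ0, hδ1⟩ := hδ
  rcases lt_abs.1 hpδ with hhigh | hlow
  · have : h (1 / 2 + δ) < h p :=
      hh.strictMonoOn ⟨by linarith, by linarith⟩ hp (by linarith)
    rw [Real.sign_of_pos (by linarith), Real.sign_of_pos (by linarith)]
  · have : h p < h (1 / 2 - δ) :=
      hh.strictMonoOn hp ⟨by linarith, by linarith⟩ (by linarith)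
    rw [hh.map_half_sub ⟨hδ0, hδ1⟩] at this
    rw [Real.sign_of_neg (by linarith), Real.sign_of_neg (by linarith)]

end IsLinkFunction

end LinkFunction

section LabelLaw

variable {X : Type*} [MeasurableSpace X] {μ : Measure X} {η : X → ℝ}

/-- The law of the labelled point `(x, Y)`, where `Y = 1` with probability `η x` and `Y = -1` with
probability `1 - η x`. The distribution `ρ` of the data is recovered as `ρ_X.bind (labelLaw η)`.
Only for `η x ∈ [0, 1]` is this a probability measure. -/
noncomputable def labelLaw (η : X → ℝ) (x : X) : Measure (X × ℝ) :=
  ENNReal.ofReal (η x) • Measure.dirac (x, (1 : ℝ)) +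
    ENNReal.ofReal (1 - η x) • Measure.dirac (x, (-1 : ℝ))

theorem measurable_labelLaw (hη : Measurable η) : Measurable (labelLaw η) := by
  refine Measure.measurable_of_measurable_coe _ fun s hs => ?_
  have hdirac : ∀ y : ℝ, Measurable fun x : X => Measure.dirac (x, y) s := fun y =>
    (Measure.measurable_coe hs).comp (Measure.measurable_dirac.comp measurable_prodMk_right)
  simp only [labelLaw, Measure.add_apply, Measure.smul_apply, smul_eq_mul]
  exact (hη.ennreal_ofReal.mul (hdirac 1)).add
    ((hη.const_sub 1).ennreal_ofReal.mul (hdirac (-1)))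

theorem bind_labelLaw (μ : Measure X) (hη : Measurable η) :
    μ.bind (labelLaw η) =
      (μ.withDensity fun x => ENNReal.ofReal (η x)).map (·, (1 : ℝ)) +
        (μ.withDensity fun x => ENNReal.ofReal (1 - η x)).map (·, (-1 : ℝ)) := by
  refine Measure.ext_of_lintegral _ fun F hF => ?_
  have hsection : ∀ y : ℝ, Measurable fun x : X => F (x, y) :=
    fun y => hF.comp measurable_prodMk_right
  have hpos : Measurable fun x => ENNReal.ofReal (η x) := hη.ennreal_ofReal
  have hneg : Measurable fun x => ENNReal.ofReal (1 - η x) := (hη.const_sub 1).ennreal_ofReal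
  rw [Measure.lintegral_bind (measurable_labelLaw hη).aemeasurable hF.aemeasurable,
    lintegral_add_measure, lintegral_map hF measurable_prodMk_right,
    lintegral_map hF measurable_prodMk_right,
    lintegral_withDensity_eq_lintegral_mul _ hpos (hsection 1),
    lintegral_withDensity_eq_lintegral_mul _ hneg (hsection (-1)),
    ← lintegral_add_left (hpos.mul (hsection 1))]
  simp only [labelLaw, lintegral_add_measure, lintegral_smul_measure, lintegral_dirac' _ hF,
    smul_eq_mul, Pi.mul_apply]

section Integral

variable {E : Type*} [NormedAddCommGroup E] [NormedSpace ℝ E] {F : X × ℝ → E}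

theorem integrable_map_withDensity_prodMk_iff {w : X → ℝ} (hw : Measurable w)
    (hw0 : ∀ᵐ x ∂μ, 0 ≤ w x) (y : ℝ) :
    Integrable F ((μ.withDensity fun x => ENNReal.ofReal (w x)).map (·, y)) ↔
      Integrable (fun x => w x • F (x, y)) μ := by
  rw [(measurableEmbedding_prod_mk_right y).integrable_map_iff,
    integrable_withDensity_iff_integrable_smul' hw.ennreal_ofReal
      (ae_of_all _ fun _ => ENNReal.ofReal_lt_top)]
  refine integrable_congr ?_
  filter_upwards [hw0] with x hx
  rw [Function.comp_apply, ENNReal.toReal_ofReal hx]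

theorem integral_map_withDensity_prodMk {w : X → ℝ} (hw : Measurable w)
    (hw0 : ∀ᵐ x ∂μ, 0 ≤ w x) (y : ℝ) :
    ∫ z, F z ∂(μ.withDensity fun x => ENNReal.ofReal (w x)).map (·, y) =
      ∫ x, w x • F (x, y) ∂μ := by
  rw [(measurableEmbedding_prod_mk_right y).integral_map,
    integral_withDensity_eq_integral_toReal_smul hw.ennreal_ofReal
      (ae_of_all _ fun _ => ENNReal.ofReal_lt_top)]
  refine integral_congr_ae ?_
  filter_upwards [hw0] with x hx
  rw [ENNReal.toReal_ofReal hx]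

theorem integrable_bind_labelLaw_iff (hη : Measurable η)
    (hη01 : ∀ᵐ x ∂μ, η x ∈ Icc (0 : ℝ) 1) :
    Integrable F (μ.bind (labelLaw η)) ↔
      Integrable (fun x => η x • F (x, 1)) μ ∧ Integrable (fun x => (1 - η x) • F (x, -1)) μ := by
  rw [bind_labelLaw μ hη, integrable_add_measure,
    integrable_map_withDensity_prodMk_iff hη (hη01.mono fun x hx => hx.1),
    integrable_map_withDensity_prodMk_iff (hη.const_sub 1)
      (hη01.mono fun x hx => sub_nonneg.2 hx.2)]

theorem integral_bind_labelLaw (hη : Measurable η) (hη01 : ∀ᵐ x ∂μ, η x ∈ Icc (0 : ℝ) 1)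
    (hF : Integrable F (μ.bind (labelLaw η))) :
    ∫ z, F z ∂μ.bind (labelLaw η) = ∫ x, η x • F (x, 1) + (1 - η x) • F (x, -1) ∂μ := by
  obtain ⟨hpos, hneg⟩ := (integrable_bind_labelLaw_iff hη hη01).1 hF
  rw [bind_labelLaw μ hη] at hF ⊢
  rw [integral_add_measure hF.left_of_add_measure hF.right_of_add_measure,
    integral_map_withDensity_prodMk hη (hη01.mono fun x hx => hx.1),
    integral_map_withDensity_prodMk (hη.const_sub 1) (hη01.mono fun x hx => sub_nonneg.2 hx.2),
    integral_add hpos hneg]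

end Integral

section Risk

variable {φ h : ℝ → ℝ} {f f₀ : X → ℝ}

theorem integrable_conditionalRisk (hη : Measurable η) (hη01 : ∀ᵐ x ∂μ, η x ∈ Icc (0 : ℝ) 1)
    (hf : Integrable (fun z : X × ℝ => φ (z.2 * f z.1)) (μ.bind (labelLaw η))) :
    Integrable (fun x => conditionalRisk φ (η x) (f x)) μ := by
  obtain ⟨hpos, hneg⟩ := (integrable_bind_labelLaw_iff hη hη01).1 hf
  simp only [smul_eq_mul, one_mul, neg_one_mul] at hpos hneg
  exact hpos.add hneg

theorem integral_conditionalRisk (hη : Measurable η) (hη01 : ∀ᵐ x ∂μ, η x ∈ Icc (0 : ℝ) 1)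
    (hf : Integrable (fun z : X × ℝ => φ (z.2 * f z.1)) (μ.bind (labelLaw η))) :
    ∫ x, conditionalRisk φ (η x) (f x) ∂μ = ∫ z, φ (z.2 * f z.1) ∂μ.bind (labelLaw η) := by
  simpa only [conditionalRisk, smul_eq_mul, one_mul, neg_one_mul] using
    (integral_bind_labelLaw hη hη01 hf).symm

namespace IsLinkFunction

theorem conditionalRisk_ae_le (hh : IsLinkFunction φ h) (hη01 : ∀ᵐ x ∂μ, η x ∈ Ioo (0 : ℝ) 1)
    (hf₀link : ∀ᵐ x ∂μ, f₀ x = h (η x)) (f : X → ℝ) :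
    ∀ᵐ x ∂μ, conditionalRisk φ (η x) (f₀ x) ≤ conditionalRisk φ (η x) (f x) := by
  filter_upwards [hη01, hf₀link] with x hx hlink
  exact hlink ▸ hh.conditionalRisk_le hx (f x)

theorem integral_le (hh : IsLinkFunction φ h) (hη : Measurable η)
    (hη01 : ∀ᵐ x ∂μ, η x ∈ Ioo (0 : ℝ) 1) (hf₀link : ∀ᵐ x ∂μ, f₀ x = h (η x))
    (hf₀ : Integrable (fun z : X × ℝ => φ (z.2 * f₀ z.1)) (μ.bind (labelLaw η)))
    (hf : Integrable (fun z : X × ℝ => φ (z.2 * f z.1)) (μ.bind (labelLaw η))) :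
    ∫ z, φ (z.2 * f₀ z.1) ∂μ.bind (labelLaw η) ≤ ∫ z, φ (z.2 * f z.1) ∂μ.bind (labelLaw η) := by
  have hη01' := hη01.mono fun x hx => Ioo_subset_Icc_self hx
  rw [← integral_conditionalRisk hη hη01' hf₀, ← integral_conditionalRisk hη hη01' hf]
  exact integral_mono_ae (integrable_conditionalRisk hη hη01' hf₀)
    (integrable_conditionalRisk hη hη01' hf) (hh.conditionalRisk_ae_le hη01 hf₀link f)

theorem ae_eq_of_integral_le (hh : IsLinkFunction φ h) (hη : Measurable η)
    (hη01 : ∀ᵐ x ∂μ, η x ∈ Ioo (0 : ℝ) 1) (hf₀link : ∀ᵐ x ∂μ, f₀ x = h (η x))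
    (hf₀ : Integrable (fun z : X × ℝ => φ (z.2 * f₀ z.1)) (μ.bind (labelLaw η)))
    (hf : Integrable (fun z : X × ℝ => φ (z.2 * f z.1)) (μ.bind (labelLaw η)))
    (hle : ∫ z, φ (z.2 * f z.1) ∂μ.bind (labelLaw η) ≤
      ∫ z, φ (z.2 * f₀ z.1) ∂μ.bind (labelLaw η)) :
    ∀ᵐ x ∂μ, f x = h (η x) := by
  have hη01' := hη01.mono fun x hx => Ioo_subset_Icc_self hx
  have heq := le_antisymm (hh.integral_le hη hη01 hf₀link hf₀ hf) hle
  rw [← integral_conditionalRisk hη hη01' hf₀, ← integral_conditionalRisk hη hη01' hf,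
    integral_eq_iff_of_ae_le (integrable_conditionalRisk hη hη01' hf₀)
      (integrable_conditionalRisk hη hη01' hf) (hh.conditionalRisk_ae_le hη01 hf₀link f)] at heq
  filter_upwards [heq, hη01, hf₀link] with x hxeq hx hlink
  by_contra hne
  rw [hlink] at hxeq
  exact (hh.conditionalRisk_lt (η x) hx (f x) hne).ne hxeq

end IsLinkFunction

end Risk

end LabelLaw

section Classification

variable {X : Type*} [MeasurableSpace X] {η : X → ℝ}

theorem IsLinkFunction.ae_sign_inner_eq {H : Type*} [NormedAddCommGroup H] [InnerProductSpace ℝ H]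
    {μ : Measure X} {φ h : ℝ → ℝ} {δ R : ℝ} {Φ : X → H} {g g₀ : H} (hh : IsLinkFunction φ h)
    (hδ : δ ∈ Ioo (0 : ℝ) (1 / 2)) (hlow : ∀ᵐ x ∂μ, δ < |η x - 1 / 2|)
    (hη01 : ∀ᵐ x ∂μ, η x ∈ Ioo (0 : ℝ) 1) (hΦ : ∀ᵐ x ∂μ, ‖Φ x‖ ≤ R)
    (hg₀ : ∀ᵐ x ∂μ, ⟪g₀, Φ x⟫ = h (η x)) (hg : ‖g - g₀‖ * R ≤ linkMargin h δ) :
    ∀ᵐ x ∂μ, Real.sign ⟪g, Φ x⟫ = Real.sign (2 * η x - 1) := by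
  filter_upwards [hlow, hη01, hΦ, hg₀] with x hxδ hx hΦx hlink
  refine hh.sign_eq_of_abs_sub_le hδ hx hxδ ?_
  calc |⟪g, Φ x⟫ - h (η x)| = |⟪g - g₀, Φ x⟫| := by rw [← hlink, inner_sub_left]
    _ ≤ ‖g - g₀‖ * ‖Φ x‖ := abs_real_inner_le_norm _ _
    _ ≤ ‖g - g₀‖ * R := by gcongr
    _ ≤ linkMargin h δ := hg

theorem measure_sign_ne_congr {ρ : Measure (X × ℝ)} {f₁ f₂ : X → ℝ}
    (hsign : ∀ᵐ x ∂ρ.map Prod.fst, Real.sign (f₁ x) = Real.sign (f₂ x)) :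
    ρ {p : X × ℝ | Real.sign (f₁ p.1) ≠ p.2} = ρ {p : X × ℝ | Real.sign (f₂ p.1) ≠ p.2} := by
  refine measure_congr (eventuallyEq_set.2 ?_)
  filter_upwards [ae_of_ae_map measurable_fst.aemeasurable hsign] with p hp
  simp only [hp]

theorem bayes_optimal_neighborhood_general
    {H : Type*} [NormedAddCommGroup H] [InnerProductSpace ℝ H] [CompleteSpace H]
    {Φ : X → H} {R : ℝ} (hR : 0 < R) {ρ : Measure (X × ℝ)}
    (hΦ : ∀ᵐ x ∂ρ.map Prod.fst, ‖Φ x‖ ≤ R) (hη : Measurable η)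
    (hcond : ρ = (ρ.map Prod.fst).bind (labelLaw η)) {φ : ℝ → ℝ} {Lrisk : H → ℝ}
    (hLdef : ∀ g, Lrisk g = ∫ z : X × ℝ, φ (z.2 * ⟪g, Φ z.1⟫) ∂ρ)
    (hLint : ∀ g : H, Integrable (fun z : X × ℝ => φ (z.2 * ⟪g, Φ z.1⟫)) ρ)
    (hLconv : ConvexOn ℝ univ Lrisk) (hLlsc : LowerSemicontinuous Lrisk)
    {δ : ℝ} (hδ : δ ∈ Ioo (0 : ℝ) (1 / 2)) (hlow : ∀ᵐ x ∂ρ.map Prod.fst, δ < |η x - 1 / 2|)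
    (hη01 : ∀ᵐ x ∂ρ.map Prod.fst, η x ∈ Ioo (0 : ℝ) 1)
    {hstar : ℝ → ℝ} (hlink : IsLinkFunction φ hstar)
    {gstar : H} (hgstar : ∀ᵐ x ∂ρ.map Prod.fst, ⟪gstar, Φ x⟫ = hstar (η x)) :
    ∀ᶠ lam in 𝓝[>] 0, ∀ glam, IsTikhonovMin Lrisk lam glam →
      ∀ g, ‖g - glam‖ ≤ linkMargin hstar δ / (2 * R) →
        ρ {p : X × ℝ | Real.sign ⟪g, Φ p.1⟫ ≠ p.2} =
          ρ {p : X × ℝ | Real.sign (2 * η p.1 - 1) ≠ p.2} := by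
  set μ := ρ.map Prod.fst
  have hint : ∀ g : H, Integrable (fun z : X × ℝ => φ (z.2 * ⟪g, Φ z.1⟫)) (μ.bind (labelLaw η)) :=
    fun g => by rw [← hcond]; exact hLint g
  have hrisk : ∀ g, Lrisk g = ∫ z : X × ℝ, φ (z.2 * ⟪g, Φ z.1⟫) ∂μ.bind (labelLaw η) :=
    fun g => by rw [← hcond]; exact hLdef g
  have hmin : ∀ g, Lrisk gstar ≤ Lrisk g := fun g => by
    rw [hrisk, hrisk]
    exact hlink.integral_le (f₀ := fun x => ⟪gstar, Φ x⟫) (f := fun x => ⟪g, Φ x⟫) hη hη01 hgstar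
      (hint gstar) (hint g)
  obtain ⟨g₀, hg₀, hnear⟩ := exists_eventually_isTikhonovMin_mem hLconv hLlsc hmin
  have hg₀link : ∀ᵐ x ∂μ, ⟪g₀, Φ x⟫ = hstar (η x) := by
    refine hlink.ae_eq_of_integral_le (f₀ := fun x => ⟪gstar, Φ x⟫) (f := fun x => ⟪g₀, Φ x⟫)
      hη hη01 hgstar (hint gstar) (hint g₀) ?_
    rw [← hrisk, ← hrisk]
    exact hg₀ gstar
  have hradius : 0 < linkMargin hstar δ / (2 * R) :=
    div_pos (hlink.linkMargin_pos hδ) (by positivity)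
  filter_upwards [hnear _ (Metric.closedBall_mem_nhds g₀ hradius)] with lam hlam glam hglam g hg
  refine measure_sign_ne_congr (hlink.ae_sign_inner_eq hδ hlow hη01 hΦ hg₀link ?_)
  have hdist : ‖glam - g₀‖ ≤ linkMargin hstar δ / (2 * R) :=
    mem_closedBall_iff_norm.1 (hlam glam hglam)
  calc ‖g - g₀‖ * R ≤ (linkMargin hstar δ / (2 * R) + linkMargin hstar δ / (2 * R)) * R := by
        gcongr
        exact (norm_sub_le_norm_sub_add_norm_sub g glam g₀).trans (add_le_add hg hdist)
    _ = linkMargin hstar δ := by field_simp; ring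

end Classification

/-- Bayes optimality of a neighborhood of `g_λ` (Proposition 1): under the
bounded-kernel assumption (A2), the strong low-noise condition (A3), the link
function assumptions (A4) and (A5), and convexity/continuity of the expected
risk, there exists `λ > 0` such that every `g` in the `m(δ)/(2R)`-ball around a
minimizer `g_λ` of the regularized risk achieves the Bayes classification
error. -/
theorem bayes_optimal_neighborhood
    {X : Type*} [MeasurableSpace X]
    {H : Type*} [NormedAddCommGroup H] [InnerProductSpace ℝ H] [CompleteSpace H]
    (Φ : X → H) (hΦmeas : StronglyMeasurable Φ)
    (R : ℝ) (hR : 0 < R) (hΦbd : ∀ x : X, ‖Φ x‖ ≤ R)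
    (ρ : Measure (X × ℝ)) [IsProbabilityMeasure ρ]
    (η : X → ℝ) (hηmeas : Measurable η)
    -- η is the conditional probability of the label `+1` given `x`:
    (hcond : ρ = (ρ.map Prod.fst).bind fun x =>
      ENNReal.ofReal (η x) • Measure.dirac (x, (1 : ℝ)) +
        ENNReal.ofReal (1 - η x) • Measure.dirac (x, (-1 : ℝ)))
    (φ : ℝ → ℝ) (hφconv : ConvexOn ℝ Set.univ φ)
    (Lrisk : H → ℝ)
    (hLdef : ∀ g : H, Lrisk g = ∫ z : X × ℝ, φ (z.2 * ⟪g, Φ z.1⟫) ∂ρ)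
    (hLint : ∀ g : H, Integrable (fun z : X × ℝ => φ (z.2 * ⟪g, Φ z.1⟫)) ρ)
    (hLconv : ConvexOn ℝ Set.univ Lrisk) (hLcont : Continuous Lrisk)
    -- (A3): strong low-noise condition
    (δ : ℝ) (hδ : δ ∈ Set.Ioo (0 : ℝ) (1 / 2))
    (hlow : ∀ᵐ x ∂ρ.map Prod.fst, δ < |η x - 1 / 2|)
    -- (A4): properties of the link function `h_*`
    (hη01 : ∀ᵐ x ∂ρ.map Prod.fst, η x ∈ Set.Ioo (0 : ℝ) 1)
    (hstar : ℝ → ℝ)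
    (hstardiff : ∀ p ∈ Set.Ioo (0 : ℝ) 1, DifferentiableAt ℝ hstar p)
    (hstarmono : StrictMonoOn hstar (Set.Ioo (0 : ℝ) 1))
    (hstarmin : ∀ p ∈ Set.Ioo (0 : ℝ) 1, ∀ h : ℝ,
      p * φ (hstar p) + (1 - p) * φ (-hstar p) ≤ p * φ h + (1 - p) * φ (-h))
    (hstaruniq : ∀ p ∈ Set.Ioo (0 : ℝ) 1, ∀ h : ℝ,
      p * φ h + (1 - p) * φ (-h) = p * φ (hstar p) + (1 - p) * φ (-hstar p) →
      h = hstar p)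
    (hstarsign : ∀ p ∈ Set.Ioo (0 : ℝ) 1,
      Real.sign (hstar p) = Real.sign (p - 1 / 2))
    -- (A5): the Bayes rule for the risk lies in `H` and is unique
    (gstar : H)
    (hgstarmin : ∀ f : X → ℝ, Measurable f →
      Integrable (fun z : X × ℝ => φ (z.2 * f z.1)) ρ →
      (∫ z : X × ℝ, φ (z.2 * ⟪gstar, Φ z.1⟫) ∂ρ) ≤ ∫ z : X × ℝ, φ (z.2 * f z.1) ∂ρ)
    (hgstaruniq : ∀ g : H, Lrisk g = Lrisk gstar → g = gstar)
    (hgstarlink : ∀ᵐ x ∂ρ.map Prod.fst, ⟪gstar, Φ x⟫ = hstar (η x)) :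
    ∃ lam : ℝ, 0 < lam ∧ ∀ glam : H,
      (∀ g : H, Lrisk glam + lam / 2 * ‖glam‖ ^ 2 ≤ Lrisk g + lam / 2 * ‖g‖ ^ 2) →
      ∀ g : H, ‖g - glam‖ ≤ max (hstar (1 / 2 + δ)) |hstar (1 / 2 - δ)| / (2 * R) →
        ρ {p : X × ℝ | Real.sign ⟪g, Φ p.1⟫ ≠ p.2} =
          ρ {p : X × ℝ | Real.sign (2 * η p.1 - 1) ≠ p.2} := by
  have hlink : IsLinkFunction φ hstar := ⟨hstarmono, fun p hp t ht =>
    (hstarmin p hp t).lt_of_ne fun heq => ht (hstaruniq p hp t heq.symm)⟩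
  have hsmall := bayes_optimal_neighborhood_general hR (ae_of_all _ hΦbd) hηmeas hcond hLdef hLint
    hLconv hLcont.lowerSemicontinuous hδ hlow hη01 hlink hgstarlink
  obtain ⟨lam, hopt, hpos⟩ := (hsmall.and self_mem_nhdsWithin).exists
  exact ⟨lam, hpos, hopt⟩
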